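/- Let $f: \mathbb{R}^N \to \mathbb{R}$ be partially separable of degree $\omega$ with convex summands, block-Lipschitz gradients with constants $L_1,\dots,L_n$, and let $\hat{Z}$ be a $(C,\tau)$-distributed sampling over a balanced partition into parts of size $s$. Let $\xi = \max\{|P^{(c)} \cap J| : c \in [C], J \in \mathcal{J}\}$. Then for all $x, h \in \mathbb{R}^N$: $\mathbb{E}[f(x + h_{[\hat{Z}]})] \leq f(x) + \frac{C\tau}{n}\left(\langle\nabla f(x), h\rangle + \frac{\beta}{2}\|h\|_w^2\right)$ with $\beta = 1 + \frac{(\xi-1)(\tau-1)}{\max\{1, s-1\}} + (C-1)\frac{\xi\tau}{s}$ and $w_i = L_i$. -/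

import Mathlib

open Finset in
lemma eso_reindex {C s n : ℕ} (τ : ℕ) (P : Fin C → Finset (Fin n)) (e : Fin C → (Fin s ↪ Fin n))
    (he : ∀ c, univ.map (e c) = P c) (F : (Fin C → Finset (Fin n)) → ℝ) :
    ∑ Z ∈ Fintype.piFinset (fun c : Fin C => (P c).powersetCard τ), F Z
      = ∑ Z ∈ Fintype.piFinset (fun _ : Fin C => (univ : Finset (Fin s)).powersetCard τ),
          F (fun c => (Z c).map (e c)) := by
  symm
  refine Finset.sum_nbij (fun Z c => (Z c).map (e c)) ?_ ?_ ?_ (fun _ _ => rfl)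
  · intro Z hZ
    simp only [Fintype.mem_piFinset, mem_powersetCard] at hZ ⊢
    intro c
    refine ⟨?_, by simpa using (hZ c).2⟩
    rw [← he c]
    exact Finset.map_subset_map.2 (subset_univ _)
  · intro Z _ Z' _ h
    funext c
    exact Finset.map_injective (e c) (congrFun h c)
  · intro Y hY
    have hY' : ∀ c, Y c ⊆ P c ∧ (Y c).card = τ := by
      simpa only [Finset.mem_coe, Fintype.mem_piFinset, mem_powersetCard] using hY
    have : ∀ c, ∃ u : Finset (Fin s), u.map (e c) = Y c := by
      intro c
      have := (hY' c).1
      rw [← he c, Finset.subset_map_iff] at this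
      obtain ⟨u, _, hu⟩ := this
      exact ⟨u, hu.symm⟩
    choose u hu using this
    refine ⟨u, ?_, funext hu⟩
    simp only [Finset.mem_coe, Fintype.mem_piFinset, mem_powersetCard]
    intro c
    refine ⟨subset_univ _, ?_⟩
    rw [← (hY' c).2, ← hu c, card_map]

open Finset in
/-- the standard sample space -/
def esoOm (C s τ : ℕ) : Finset (Fin C → Finset (Fin s)) :=
  Fintype.piFinset (fun _ : Fin C => (univ : Finset (Fin s)).powersetCard τ)

open Finset in
lemma eso_perm {C s : ℕ} (τ : ℕ) (σ : Fin C → Equiv.Perm (Fin s))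
    (F : (Fin C → Finset (Fin s)) → ℝ) :
    ∑ Z ∈ esoOm C s τ, F Z = ∑ Z ∈ esoOm C s τ, F (fun c => (Z c).map (σ c).toEmbedding) := by
  unfold esoOm
  exact eso_reindex τ (fun _ => univ) (fun c => (σ c).toEmbedding) (fun c => by simp) F

open Finset in
lemma eso_perm' {C s : ℕ} (τ : ℕ) (π : Equiv.Perm (Fin C))
    (F : (Fin C → Finset (Fin s)) → ℝ) :
    ∑ Z ∈ esoOm C s τ, F Z = ∑ Z ∈ esoOm C s τ, F (fun c => Z (π c)) := by
  symm
  refine Finset.sum_nbij' (fun Z c => Z (π c)) (fun Z c => Z (π.symm c)) ?_ ?_ ?_ ?_ ?_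
  · intro Z hZ
    simp only [esoOm, Fintype.mem_piFinset] at hZ ⊢
    exact fun c => hZ _
  · intro Z hZ
    simp only [esoOm, Fintype.mem_piFinset] at hZ ⊢
    exact fun c => hZ _
  · intro Z _; funext c; simp
  · intro Z _; funext c; simp
  · intro Z _; rfl

open Finset in
/-- number of sampled marked elements -/
def esoK {C s : ℕ} (K : Finset (Fin s)) (Z : Fin C → Finset (Fin s)) : ℕ :=
  ∑ c, (K ∩ Z c).card

lemma eso_mem_swap {s : ℕ} (a b : Fin s) (U : Finset (Fin s)) (x : Fin s) :
    x ∈ U.map (Equiv.swap a b).toEmbedding ↔ Equiv.swap a b x ∈ U := by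
  simp [Finset.mem_map_equiv]

open Finset in
lemma eso_card_swap {s : ℕ} {K : Finset (Fin s)} {a b : Fin s} (ha : a ∈ K) (hb : b ∈ K)
    (U : Finset (Fin s)) :
    (K ∩ U.map (Equiv.swap a b).toEmbedding).card = (K ∩ U).card := by
  have hK : K.map (Equiv.swap a b).toEmbedding = K := by
    ext x
    rw [eso_mem_swap]
    rw [Equiv.swap_apply_def]
    split_ifs with h1 h2
    · subst h1; simp [ha, hb]
    · subst h2; simp [ha, hb]
    · rfl
  conv_lhs => rw [← hK]
  rw [← Finset.map_inter, card_map]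

open Finset in
lemma eso_symm {C s : ℕ} (τ : ℕ) {K : Finset (Fin s)} (c c0 : Fin C) {j j0 : Fin s}
    (hj : j ∈ K) (hj0 : j0 ∈ K) (ψ : ℕ → ℝ) :
    ∑ Z ∈ esoOm C s τ, (if j ∈ Z c then ψ (esoK K Z) else 0)
      = ∑ Z ∈ esoOm C s τ, (if j0 ∈ Z c0 then ψ (esoK K Z) else 0) := by
  rw [eso_perm τ (fun _ => Equiv.swap j j0), eso_perm' τ (Equiv.swap c c0)]
  refine Finset.sum_congr rfl fun Z _ => ?_
  have h1 : esoK K (fun c_1 => (Z ((Equiv.swap c c0) c_1)).map (Equiv.swap j j0).toEmbedding)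
      = esoK K Z := by
    unfold esoK
    simp only [eso_card_swap hj hj0]
    exact Equiv.sum_comp (Equiv.swap c c0) (fun c => (K ∩ Z c).card)
  simp only [eso_mem_swap, Equiv.swap_apply_left]
  rw [h1]

open Finset in
lemma eso_cnt {C s : ℕ} (τ : ℕ) (c0 : Fin C) (j0 : Fin s) :
    (s : ℝ) * ∑ Z ∈ esoOm C s τ, (if j0 ∈ Z c0 then (1 : ℝ) else 0)
      = τ * (esoOm C s τ).card := by
  have h1 : ∀ j : Fin s, ∑ Z ∈ esoOm C s τ, (if j ∈ Z c0 then (1 : ℝ) else 0)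
      = ∑ Z ∈ esoOm C s τ, (if j0 ∈ Z c0 then (1 : ℝ) else 0) := fun j =>
    eso_symm (K := univ) τ c0 c0 (mem_univ _) (mem_univ _) (fun _ => 1)
  have h2 : ∑ j : Fin s, ∑ Z ∈ esoOm C s τ, (if j ∈ Z c0 then (1 : ℝ) else 0)
      = τ * (esoOm C s τ).card := by
    rw [Finset.sum_comm]
    have : ∀ Z ∈ esoOm C s τ, ∑ j : Fin s, (if j ∈ Z c0 then (1 : ℝ) else 0) = τ := by
      intro Z hZ
      simp only [esoOm, Fintype.mem_piFinset, mem_powersetCard] at hZ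
      simp [(hZ c0).2]
    rw [Finset.sum_congr rfl this]
    simp [mul_comm]
  rw [← h2, Finset.sum_congr rfl fun j _ => h1 j]
  simp

open Finset in
lemma eso_cnt_ne {C s : ℕ} (τ : ℕ) (c0 c : Fin C) (hc : c ≠ c0) (j0 j : Fin s) :
    (s : ℝ) * ∑ Z ∈ esoOm C s τ, (if j0 ∈ Z c0 ∧ j ∈ Z c then (1 : ℝ) else 0)
      = τ * ∑ Z ∈ esoOm C s τ, (if j0 ∈ Z c0 then (1 : ℝ) else 0) := by
  have h1 : ∀ j' : Fin s, ∑ Z ∈ esoOm C s τ, (if j0 ∈ Z c0 ∧ j' ∈ Z c then (1 : ℝ) else 0)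
      = ∑ Z ∈ esoOm C s τ, (if j0 ∈ Z c0 ∧ j ∈ Z c then (1 : ℝ) else 0) := by
    intro j'
    rw [eso_perm τ (fun d => if d = c then Equiv.swap j' j else 1)]
    refine Finset.sum_congr rfl fun Z _ => ?_
    simp [hc.symm]
    rfl
  have h2 : ∑ j' : Fin s, ∑ Z ∈ esoOm C s τ, (if j0 ∈ Z c0 ∧ j' ∈ Z c then (1 : ℝ) else 0)
      = τ * ∑ Z ∈ esoOm C s τ, (if j0 ∈ Z c0 then (1 : ℝ) else 0) := by
    rw [Finset.sum_comm, Finset.mul_sum]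
    refine Finset.sum_congr rfl fun Z hZ => ?_
    simp only [esoOm, Fintype.mem_piFinset, mem_powersetCard] at hZ
    by_cases h : j0 ∈ Z c0 <;> simp [h, (hZ c).2]
  rw [← h2, Finset.sum_congr rfl fun j _ => h1 j]
  simp

open Finset in
lemma eso_cnt_eq {C s : ℕ} (τ : ℕ) (c0 : Fin C) (j0 j : Fin s) (hj : j ≠ j0) :
    ((s : ℝ) - 1) * ∑ Z ∈ esoOm C s τ, (if j0 ∈ Z c0 ∧ j ∈ Z c0 then (1 : ℝ) else 0)
      = ((τ : ℝ) - 1) * ∑ Z ∈ esoOm C s τ, (if j0 ∈ Z c0 then (1 : ℝ) else 0) := by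
  have h1 : ∀ j' ∈ univ.erase j0,
      ∑ Z ∈ esoOm C s τ, (if j0 ∈ Z c0 ∧ j' ∈ Z c0 then (1 : ℝ) else 0)
      = ∑ Z ∈ esoOm C s τ, (if j0 ∈ Z c0 ∧ j ∈ Z c0 then (1 : ℝ) else 0) := by
    intro j' hj'
    have hj' : j' ≠ j0 := by simpa using hj'
    rw [eso_perm τ (fun d => Equiv.swap j' j)]
    refine Finset.sum_congr rfl fun Z _ => ?_
    simp only [eso_mem_swap, Equiv.swap_apply_left, Equiv.swap_apply_of_ne_of_ne hj'.symm hj.symm]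
  have h2 : ∑ j' ∈ univ.erase j0,
      ∑ Z ∈ esoOm C s τ, (if j0 ∈ Z c0 ∧ j' ∈ Z c0 then (1 : ℝ) else 0)
      = ((τ : ℝ) - 1) * ∑ Z ∈ esoOm C s τ, (if j0 ∈ Z c0 then (1 : ℝ) else 0) := by
    rw [Finset.sum_comm, Finset.mul_sum]
    refine Finset.sum_congr rfl fun Z hZ => ?_
    simp only [esoOm, Fintype.mem_piFinset, mem_powersetCard] at hZ
    by_cases h : j0 ∈ Z c0
    · have := Finset.sum_erase_eq_sub (f := fun j' => if j' ∈ Z c0 then (1 : ℝ) else 0)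
        (mem_univ j0)
      simp only [h, true_and, if_true, mul_one]
      rw [this]
      simp [h, (hZ c0).2]
    · simp [h]
  have hs : 1 ≤ s := Nat.one_le_of_lt j0.pos
  rw [← h2, Finset.sum_congr rfl h1]
  simp [Nat.cast_sub hs]

open Finset in
lemma eso_moment {C s : ℕ} (τ : ℕ) (hτ1 : 1 ≤ τ) (hτs : τ ≤ s) {K : Finset (Fin s)}
    (c0 : Fin C) {j0 : Fin s} (hj0 : j0 ∈ K) :
    ∑ Z ∈ esoOm C s τ, (if j0 ∈ Z c0 then (esoK K Z : ℝ) else 0)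
      = (1 + ((K.card : ℝ) - 1) * ((τ : ℝ) - 1) / max 1 ((s : ℝ) - 1)
                + ((C : ℝ) - 1) * ((K.card : ℝ) * τ / s)) *
        ∑ Z ∈ esoOm C s τ, (if j0 ∈ Z c0 then (1 : ℝ) else 0) := by
  set M := ∑ Z ∈ esoOm C s τ, (if j0 ∈ Z c0 then (1 : ℝ) else 0) with hM
  have hs : 1 ≤ s := hτ1.trans hτs
  have hs0 : (s : ℝ) ≠ 0 := by positivity
  have e1 : ∀ Z : Fin C → Finset (Fin s), (if j0 ∈ Z c0 then (esoK K Z : ℝ) else 0)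
      = ∑ c, ∑ j ∈ K, (if j0 ∈ Z c0 ∧ j ∈ Z c then (1 : ℝ) else 0) := by
    intro Z
    by_cases h : j0 ∈ Z c0
    · simp [h, esoK]
    · simp [h]
  have e2 : ∑ Z ∈ esoOm C s τ, (if j0 ∈ Z c0 then (esoK K Z : ℝ) else 0)
      = ∑ c, ∑ j ∈ K, ∑ Z ∈ esoOm C s τ, (if j0 ∈ Z c0 ∧ j ∈ Z c then (1 : ℝ) else 0) := by
    rw [Finset.sum_congr rfl fun Z _ => e1 Z, Finset.sum_comm]
    exact Finset.sum_congr rfl fun c _ => Finset.sum_comm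
  rw [e2, ← Finset.add_sum_erase _ _ (mem_univ c0)]
  have e3 : ∀ c ∈ univ.erase c0, ∑ j ∈ K, ∑ Z ∈ esoOm C s τ,
      (if j0 ∈ Z c0 ∧ j ∈ Z c then (1 : ℝ) else 0) = (K.card : ℝ) * τ / s * M := by
    intro c hc
    have hc : c ≠ c0 := by simpa using hc
    have : ∀ j ∈ K, ∑ Z ∈ esoOm C s τ,
      (if j0 ∈ Z c0 ∧ j ∈ Z c then (1 : ℝ) else 0) = τ / s * M := by
      intro j _
      have := eso_cnt_ne τ c0 c hc j0 j
      field_simp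
      linarith
    rw [Finset.sum_congr rfl this, Finset.sum_const, nsmul_eq_mul]
    ring
  have hC : 1 ≤ C := Nat.one_le_of_lt c0.pos
  rw [Finset.sum_congr rfl e3, ← Finset.add_sum_erase _ _ hj0]
  have e4 : ∀ j ∈ K.erase j0, ∑ Z ∈ esoOm C s τ,
      (if j0 ∈ Z c0 ∧ j ∈ Z c0 then (1 : ℝ) else 0)
        = ((τ : ℝ) - 1) / max 1 ((s : ℝ) - 1) * M := by
    intro j hj
    have hj : j ≠ j0 := (Finset.mem_erase.1 hj).1
    have h2 : 2 ≤ s := by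
      have := j.2; have := j0.2
      have : (j : ℕ) ≠ j0 := fun h => hj (Fin.ext h)
      omega
    have h2' : (2 : ℝ) ≤ s := by exact_mod_cast h2
    have h3 : max 1 ((s : ℝ) - 1) = s - 1 := max_eq_right (by linarith)
    have := eso_cnt_eq τ c0 j0 j hj
    rw [h3]
    have h4 : (s : ℝ) - 1 ≠ 0 := by linarith
    field_simp
    linarith
  have hK : 1 ≤ K.card := Finset.card_pos.2 ⟨_, hj0⟩
  rw [Finset.sum_congr rfl e4]
  simp only [Finset.sum_const, nsmul_eq_mul, and_self, Finset.card_erase_of_mem hj0,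
    Finset.card_erase_of_mem (mem_univ c0), Finset.card_univ, Fintype.card_fin]
  rw [← hM]
  push_cast [Nat.cast_sub hK, Nat.cast_sub hC]
  ring

open Finset in
lemma eso_convex {n : ℕ} {d : Fin n → ℕ}
    (g : (∀ i : Fin n, EuclideanSpace ℝ (Fin (d i))) → ℝ) (J : Finset (Fin n))
    (hconv : ConvexOn ℝ Set.univ g)
    (hdep : ∀ x y, (∀ i ∈ J, x i = y i) → g x = g y)
    (x h : ∀ i : Fin n, EuclideanSpace ℝ (Fin (d i))) (W S : Finset (Fin n))
    (hS : ∀ i ∈ J, i ∈ W ↔ i ∈ S) :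
    g (x + fun i => if i ∈ W then h i else 0) - g x
      ≤ ∑ i ∈ S, (1 / (S.card : ℝ)) *
        (g (x + Function.update (fun _ => 0) i ((S.card : ℝ) • h i)) - g x) := by
  have e0 : g (x + fun i => if i ∈ W then h i else 0)
      = g (x + fun i => if i ∈ S then h i else 0) := by
    refine hdep _ _ fun i hi => ?_
    simp [hS i hi]
  rw [e0]
  rcases Finset.eq_empty_or_nonempty S with rfl | hne
  · have : (x + fun i => if i ∈ (∅ : Finset (Fin n)) then h i else 0) = x := by
      funext i; simp
    rw [this]; simp
  have hk : (0 : ℝ) < S.card := by exact_mod_cast hne.card_pos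
  have e1 : (x + fun i => if i ∈ S then h i else 0)
      = ∑ i ∈ S, (1 / (S.card : ℝ)) •
          (x + Function.update (fun _ => 0) i ((S.card : ℝ) • h i)) := by
    funext j
    simp only [smul_add, Finset.sum_add_distrib, Finset.sum_const, Pi.add_apply, Finset.sum_apply,
      Pi.smul_apply]
    congr 1
    · rw [← Nat.cast_smul_eq_nsmul ℝ, smul_smul]
      field_simp
      simp
    · have : ∀ i ∈ S, (1 / (S.card : ℝ)) •
          (Function.update (fun _ => 0) i ((S.card : ℝ) • h i) :
            ∀ i : Fin n, EuclideanSpace ℝ (Fin (d i))) j = if i = j then h j else 0 := by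
        intro i _
        by_cases hij : i = j
        · subst hij
          simp only [Function.update_self, smul_smul, if_true]
          field_simp
          simp
        · rw [Function.update_of_ne (Ne.symm hij)]
          simp [hij]
      rw [Finset.sum_congr rfl this]
      simp
  have h2 := hconv.map_sum_le (t := S) (w := fun _ => 1 / (S.card : ℝ))
    (p := fun i => x + Function.update (fun _ => 0) i ((S.card : ℝ) • h i))
    (fun i _ => by positivity) (by simp; field_simp) (fun _ _ => Set.mem_univ _)
  rw [e1]
  simp only [mul_sub, Finset.sum_sub_distrib]
  have h3 : ∑ i ∈ S, 1 / (S.card : ℝ) * g x = g x := by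
    simp; field_simp
  rw [h3]
  simpa using h2

lemma eso_descent {n : ℕ} {d : Fin n → ℕ} (L : Fin n → ℝ)
    (f : (∀ i : Fin n, EuclideanSpace ℝ (Fin (d i))) → ℝ)
    (hdiff : Differentiable ℝ f)
    (hLip : ∀ (x : ∀ i : Fin n, EuclideanSpace ℝ (Fin (d i))) (i : Fin n)
        (t u : EuclideanSpace ℝ (Fin (d i))),
      |fderiv ℝ f (x + Function.update (fun _ => 0) i t) (Function.update (fun _ => 0) i u)
          - fderiv ℝ f x (Function.update (fun _ => 0) i u)| ≤ L i * ‖t‖ * ‖u‖)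
    (x : ∀ i : Fin n, EuclideanSpace ℝ (Fin (d i))) (i : Fin n)
    (v : EuclideanSpace ℝ (Fin (d i))) :
    f (x + Function.update (fun _ => 0) i v) - f x
      ≤ fderiv ℝ f x (Function.update (fun _ => 0) i v) + L i / 2 * ‖v‖ ^ 2 := by
  set u : ∀ i : Fin n, EuclideanSpace ℝ (Fin (d i)) := Function.update (fun _ => 0) i v with hu
  have hder : ∀ t : ℝ, HasDerivAt
      (fun t : ℝ => f (x + t • u) - t * fderiv ℝ f x u - L i / 2 * ‖v‖ ^ 2 * t ^ 2)
      (fderiv ℝ f (x + t • u) u - fderiv ℝ f x u - L i * ‖v‖ ^ 2 * t) t := by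
    intro t
    have h1 : HasDerivAt (fun t : ℝ => x + t • u) u t := by
      simpa using ((hasDerivAt_id t).smul_const u).const_add x
    have h2 := (hdiff (x + t • u)).hasFDerivAt.comp_hasDerivAt t h1
    have h3 := (hasDerivAt_id t).mul_const (fderiv ℝ f x u)
    have h4 := ((hasDerivAt_id t).pow 2).const_mul (L i / 2 * ‖v‖ ^ 2)
    refine ((h2.sub h3).sub h4).congr_deriv ?_
    simp
    ring
  have hsm : ∀ t : ℝ, t • u = Function.update (fun _ => 0) i (t • v) := by
    intro t
    funext j
    by_cases hij : j = i
    · subst hij; simp [hu]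
    · simp [hu, Function.update_of_ne hij]
  have hanti : AntitoneOn
      (fun t : ℝ => f (x + t • u) - t * fderiv ℝ f x u - L i / 2 * ‖v‖ ^ 2 * t ^ 2)
      (Set.Icc 0 1) := by
    refine antitoneOn_of_deriv_nonpos (convex_Icc 0 1)
      (fun t _ => (hder t).continuousAt.continuousWithinAt)
      (fun t _ => (hder t).differentiableAt.differentiableWithinAt) ?_
    intro t ht
    rw [interior_Icc] at ht
    rw [(hder t).deriv]
    have := (abs_le.1 (hLip x i (t • v) v)).2
    rw [← hsm, ← hu, norm_smul, Real.norm_of_nonneg ht.1.le] at this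
    nlinarith
  have := hanti (Set.left_mem_Icc.2 zero_le_one) (Set.right_mem_Icc.2 zero_le_one) zero_le_one
  simp at this
  linarith

open Finset in
lemma eso_enum {n s ξ : ℕ} (Pc J : Finset (Fin n)) (hP : Pc.card = s)
    (hJ : (Pc ∩ J).card ≤ ξ) (hξ : ξ ≤ s) (K : Finset (Fin s)) (hK : K.card = ξ) :
    ∃ e : Fin s ↪ Fin n, univ.map e = Pc ∧ ∀ j, e j ∈ J → j ∈ K := by
  obtain ⟨Q, hQ1, hQ2, hQ3⟩ := Finset.exists_subsuperset_card_eq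
    (Finset.inter_subset_left : Pc ∩ J ⊆ Pc) hJ (hP ▸ hξ)
  let g : Fin s ≃ Pc := (Finset.equivFinOfCardEq hP).symm
  let Q' : Finset (Fin s) := univ.filter (fun j => (g j : Fin n) ∈ Q)
  have hQ' : Q'.card = K.card := by
    rw [hK, ← hQ3]
    refine Finset.card_bij (fun j _ => (g j : Fin n)) ?_ ?_ ?_
    · intro j hj; simpa [Q'] using hj
    · intro a _ b _ h; exact g.injective (Subtype.ext h)
    · intro b hb
      exact ⟨g.symm ⟨b, hQ2 hb⟩, by simp [Q', hb], by simp⟩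
  let σ : Equiv.Perm (Fin s) := (Finset.equivOfCardEq hQ').extendSubtype
  have hσ : ∀ j, j ∈ Q' → σ j ∈ K := fun j hj => Equiv.extendSubtype_mem _ j hj
  refine ⟨(σ.symm.trans g).toEmbedding.trans (Function.Embedding.subtype _), ?_, ?_⟩
  · ext i
    simp only [mem_map, mem_univ, true_and]
    constructor
    · rintro ⟨j, rfl⟩
      exact (g (σ.symm j)).2
    · intro hi
      exact ⟨σ (g.symm ⟨i, hi⟩), by simp⟩
  · intro j hj
    have h1 : (g (σ.symm j) : Fin n) ∈ J := hj
    have h2 : σ.symm j ∈ Q' := by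
      simp only [Q', mem_filter, mem_univ, true_and]
      exact hQ1 (Finset.mem_inter.2 ⟨(g (σ.symm j)).2, h1⟩)
    simpa using hσ _ h2

open Finset in
lemma eso_perJ {n C s τ : ℕ} {d : Fin n → ℕ}
    (g : (∀ i : Fin n, EuclideanSpace ℝ (Fin (d i))) → ℝ) (J : Finset (Fin n))
    (hconv : ConvexOn ℝ Set.univ g)
    (hdep : ∀ x y, (∀ i ∈ J, x i = y i) → g x = g y)
    (P : Fin C → Finset (Fin n))
    (hpart : Finset.univ = Finset.univ.biUnion P)
    (hdisj : ∀ c c' : Fin C, c ≠ c' → Disjoint (P c) (P c'))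
    (K : Finset (Fin s)) (e : Fin C → (Fin s ↪ Fin n)) (he : ∀ c, univ.map (e c) = P c)
    (heK : ∀ c j, e c j ∈ J → j ∈ K) (c0 : Fin C) (j0 : Fin s) (hj0 : j0 ∈ K)
    (x h : ∀ i : Fin n, EuclideanSpace ℝ (Fin (d i))) :
    ∑ Z ∈ Fintype.piFinset (fun c : Fin C => (P c).powersetCard τ),
        (g (x + fun i => if i ∈ Finset.univ.biUnion Z then h i else 0) - g x)
      ≤ ∑ Z ∈ esoOm C s τ, (if j0 ∈ Z c0 then ∑ i, (1 / (esoK K Z : ℝ)) *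
        (g (x + Function.update (fun _ => 0) i ((esoK K Z : ℝ) • h i)) - g x) else 0) := by
  set D : Fin n → ℕ → ℝ := fun i k => (1 / (k : ℝ)) *
        (g (x + Function.update (fun _ => 0) i ((k : ℝ) • h i)) - g x) with hD
  have hmemP : ∀ c j, e c j ∈ P c := fun c j => by rw [← he c]; simp
  have hinj : ∀ c c' j j', e c j = e c' j' → c = c' ∧ j = j' := by
    intro c c' j j' h
    by_cases hc : c = c'
    · subst hc; exact ⟨rfl, (e c).injective h⟩
    · exact absurd (h ▸ hmemP c' j') (Finset.disjoint_left.1 (hdisj c c' hc) (hmemP c j))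
  have hsurj : ∀ i, ∃ c j, e c j = i := by
    intro i
    have : i ∈ Finset.univ.biUnion P := hpart ▸ mem_univ i
    obtain ⟨c, _, hc⟩ := Finset.mem_biUnion.1 this
    rw [← he c] at hc
    obtain ⟨j, _, hj⟩ := Finset.mem_map.1 hc
    exact ⟨c, j, hj⟩
  rw [eso_reindex τ P e he]
  change ∑ Z ∈ esoOm C s τ, _ ≤ _
  have step1 : ∀ Z ∈ esoOm C s τ,
      g (x + fun i => if i ∈ Finset.univ.biUnion (fun c => (Z c).map (e c)) then h i else 0) - g x
        ≤ ∑ c, ∑ j ∈ K, (if j ∈ Z c then D (e c j) (esoK K Z) else 0) := by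
    intro Z _
    have hdj : ∀ c ∈ (univ : Finset (Fin C)), ∀ c' ∈ (univ : Finset (Fin C)), c ≠ c' →
        Disjoint ((K ∩ Z c).map (e c)) ((K ∩ Z c').map (e c')) := by
      intro c _ c' _ hc
      rw [Finset.disjoint_left]
      rintro i hi hi'
      obtain ⟨j, _, rfl⟩ := Finset.mem_map.1 hi
      obtain ⟨j', _, hj'⟩ := Finset.mem_map.1 hi'
      exact hc (hinj _ _ _ _ hj').1.symm
    have hcard : (univ.biUnion (fun c => (K ∩ Z c).map (e c))).card = esoK K Z := by
      rw [Finset.card_biUnion hdj]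
      simp [esoK]
    have := eso_convex g J hconv hdep x h (Finset.univ.biUnion (fun c => (Z c).map (e c)))
      (univ.biUnion (fun c => (K ∩ Z c).map (e c))) ?_
    · rw [hcard, Finset.sum_biUnion hdj] at this
      refine this.trans (le_of_eq ?_)
      refine Finset.sum_congr rfl fun c _ => ?_
      rw [Finset.sum_map, ← Finset.sum_ite_mem]
    · intro i hi
      simp only [mem_biUnion, mem_univ, true_and, mem_map, mem_inter]
      constructor
      · rintro ⟨c, j, hj, rfl⟩
        exact ⟨c, j, ⟨heK c j hi, hj⟩, rfl⟩
      · rintro ⟨c, j, ⟨_, hj⟩, rfl⟩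
        exact ⟨c, j, hj, rfl⟩
  refine (Finset.sum_le_sum step1).trans (le_of_eq ?_)
  have step2 : ∀ c, ∀ j ∈ K, ∑ Z ∈ esoOm C s τ, (if j ∈ Z c then D (e c j) (esoK K Z) else 0)
      = ∑ Z ∈ esoOm C s τ, (if j0 ∈ Z c0 then D (e c j) (esoK K Z) else 0) :=
    fun c j hj => eso_symm τ c c0 hj hj0 (D (e c j))
  have step3 : ∀ k, ∑ i, D i k = ∑ c, ∑ j ∈ K, D (e c j) k := by
    intro k
    have hz : ∀ i, i ∉ J → D i k = 0 := by
      intro i hi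
      have : g (x + Function.update (fun _ => 0) i ((k : ℝ) • h i)) = g x := by
        refine hdep _ _ fun i' hi' => ?_
        have : i' ≠ i := fun h => hi (h ▸ hi')
        simp [Function.update_of_ne this]
      simp [hD, this]
    rw [hpart, Finset.sum_biUnion (fun c _ c' _ hc => hdisj c c' hc)]
    refine Finset.sum_congr rfl fun c _ => ?_
    rw [← he c, Finset.sum_map]
    symm
    refine Finset.sum_subset (subset_univ _) fun j _ hj => hz _ fun hJ => hj (heK c j hJ)
  rw [Finset.sum_comm]
  have : ∀ c, ∑ Z ∈ esoOm C s τ, ∑ j ∈ K, (if j ∈ Z c then D (e c j) (esoK K Z) else 0)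
      = ∑ Z ∈ esoOm C s τ, ∑ j ∈ K, (if j0 ∈ Z c0 then D (e c j) (esoK K Z) else 0) := by
    intro c
    rw [Finset.sum_comm, Finset.sum_congr rfl (step2 c), Finset.sum_comm]
  rw [Finset.sum_congr rfl fun c _ => this c, Finset.sum_comm]
  refine Finset.sum_congr rfl fun Z _ => ?_
  have h3 := step3 (esoK K Z)
  simp only [hD] at h3
  by_cases hz : j0 ∈ Z c0
  · simp only [hz, if_true]
    exact h3.symm
  · simp [hz]

/-- Expected separable overapproximation (ESO) for a partially separable smooth convex
function and a `(C,τ)`-distributed sampling.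

`f = ∑_{J ∈ 𝒥} f_J` where each `f_J` is convex and depends only on the blocks in `J`
(blocks live in `ℝ^(d i)`), `ω = max_{J ∈ 𝒥} |J|` is the degree of separability, the
block gradients of `f` are Lipschitz with constants `L i` (expressed via the dual
pairing), `P` is a balanced partition of the `n` blocks into `C` parts of size
`s = n / C`, the sampling picks a uniform `τ`-subset of each part independently, and
`ξ = max { |P c ∩ J| : c, J ∈ 𝒥 }`.  Then for all `x, h`:
`E[f(x + h_[Ẑ])] ≤ f(x) + (Cτ/n) (⟨∇f(x), h⟩ + (β/2) ‖h‖_w²)` with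
`β = 1 + (ξ-1)(τ-1)/max{1, s-1} + (C-1) ξτ/s` and `w i = L i`. -/
theorem distributed_ESO
    (n C s τ ξ ω : ℕ) (d : Fin n → ℕ) (L : Fin n → ℝ) (hL : ∀ i, 0 < L i)
    (𝒥 : Finset (Finset (Fin n)))
    (fJ : Finset (Fin n) → (∀ i : Fin n, EuclideanSpace ℝ (Fin (d i))) → ℝ)
    (f : (∀ i : Fin n, EuclideanSpace ℝ (Fin (d i))) → ℝ)
    (hf : ∀ x, f x = ∑ J ∈ 𝒥, fJ J x)
    (hconv : ∀ J ∈ 𝒥, ConvexOn ℝ Set.univ (fJ J))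
    (hdep : ∀ J ∈ 𝒥, ∀ x y, (∀ i ∈ J, x i = y i) → fJ J x = fJ J y)
    (hω : ω = 𝒥.sup Finset.card)
    (hdiff : Differentiable ℝ f)
    (hLip : ∀ (x : ∀ i : Fin n, EuclideanSpace ℝ (Fin (d i))) (i : Fin n)
        (t u : EuclideanSpace ℝ (Fin (d i))),
      |fderiv ℝ f (x + Function.update (fun _ => 0) i t) (Function.update (fun _ => 0) i u)
          - fderiv ℝ f x (Function.update (fun _ => 0) i u)| ≤ L i * ‖t‖ * ‖u‖)
    (P : Fin C → Finset (Fin n))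
    (hpart : Finset.univ = Finset.univ.biUnion P)
    (hdisj : ∀ c c' : Fin C, c ≠ c' → Disjoint (P c) (P c'))
    (hsize : ∀ c, (P c).card = s) (hn : n = C * s)
    (hτ1 : 1 ≤ τ) (hτs : τ ≤ s)
    (hξ : ξ = 𝒥.sup (fun J => Finset.univ.sup (fun c => (P c ∩ J).card))) :
    ∀ x h : ∀ i : Fin n, EuclideanSpace ℝ (Fin (d i)),
      (∑ Z ∈ Fintype.piFinset (fun c : Fin C => (P c).powersetCard τ),
          f (x + fun i => if i ∈ Finset.univ.biUnion Z then h i else 0))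
        / ((Fintype.piFinset (fun c : Fin C => (P c).powersetCard τ)).card : ℝ)
      ≤ f x + (C : ℝ) * τ / n *
          (fderiv ℝ f x h
            + (1 + ((ξ : ℝ) - 1) * ((τ : ℝ) - 1) / max 1 ((s : ℝ) - 1)
                + ((C : ℝ) - 1) * ((ξ : ℝ) * τ / s)) / 2
              * ∑ i : Fin n, L i * ‖h i‖ ^ 2) := by
  intro x h
  have hsum0 : 0 ≤ ∑ i : Fin n, L i * ‖h i‖ ^ 2 :=
    Finset.sum_nonneg fun i _ => mul_nonneg (hL i).le (by positivity)
  have hs1 : 1 ≤ s := hτ1.trans hτs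
  have hne : (Fintype.piFinset (fun c : Fin C => (P c).powersetCard τ)).Nonempty := by
    rw [Fintype.piFinset_nonempty]
    intro c
    exact Finset.powersetCard_nonempty.2 (by rw [hsize c]; exact hτs)
  have hcpos : (0 : ℝ) < (Fintype.piFinset (fun c : Fin C => (P c).powersetCard τ)).card := by
    exact_mod_cast hne.card_pos
  rw [div_le_iff₀ hcpos]
  rcases Nat.eq_zero_or_pos C with hC0 | hCpos
  · have hn0 : n = 0 := by rw [hn, hC0, zero_mul]
    have : ∀ y, f y = f x := by
      intro y
      congr 1
      funext i
      exact absurd i.2 (by omega)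
    simp only [this, hC0]
    simp [mul_comm]
  have hC' : (C : ℝ) ≠ 0 := by positivity
  have hs' : (s : ℝ) ≠ 0 := by positivity
  have hCn : (C : ℝ) * τ / n = τ / s := by
    rw [hn]; push_cast; field_simp
  rw [hCn]
  have hcap : ∀ J ∈ 𝒥, ∀ c, (P c ∩ J).card ≤ ξ := by
    intro J hJ c
    rw [hξ]
    refine le_trans ?_ (Finset.le_sup (f := fun J => Finset.univ.sup (fun c => (P c ∩ J).card)) hJ)
    exact Finset.le_sup (f := fun c => (P c ∩ J).card) (Finset.mem_univ c)
  have hξs : ξ ≤ s := by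
    rw [hξ]
    refine Finset.sup_le fun J _ => Finset.sup_le fun c _ => ?_
    rw [← hsize c]
    exact Finset.card_le_card Finset.inter_subset_left
  rcases Nat.eq_zero_or_pos ξ with hξ0 | hξpos
  · have hconst : ∀ y, f y = f x := by
      intro y
      rw [hf, hf]
      refine Finset.sum_congr rfl fun J hJ => hdep J hJ _ _ fun i hi => ?_
      exfalso
      have : i ∈ Finset.univ.biUnion P := hpart ▸ Finset.mem_univ i
      obtain ⟨c, _, hc⟩ := Finset.mem_biUnion.1 this
      have h1 := hcap J hJ c
      have h2 : 0 < (P c ∩ J).card := Finset.card_pos.2 ⟨i, Finset.mem_inter.2 ⟨hc, hi⟩⟩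
      omega
    have hfd : fderiv ℝ f x = 0 := by
      have : f = fun _ => f x := funext hconst
      rw [this]; simp
    simp only [hconst, hfd, hξ0]
    rw [Finset.sum_const, nsmul_eq_mul, mul_comm]
    refine mul_le_mul_of_nonneg_right ?_ hcpos.le
    have hmax : (0 : ℝ) < max 1 ((s : ℝ) - 1) := lt_max_of_lt_left one_pos
    have hβ : ((τ : ℝ) - 1) / max 1 ((s : ℝ) - 1) ≤ 1 := by
      rw [div_le_one hmax]
      refine le_trans ?_ (le_max_right _ _)
      have : (τ : ℝ) ≤ s := by exact_mod_cast hτs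
      linarith
    have : 0 ≤ (τ : ℝ) / s * ((0 : (∀ i : Fin n, EuclideanSpace ℝ (Fin (d i))) →L[ℝ] ℝ) h +
        (1 + (((0 : ℕ) : ℝ) - 1) * ((τ : ℝ) - 1) / max 1 ((s : ℝ) - 1)
          + ((C : ℝ) - 1) * (((0 : ℕ) : ℝ) * τ / s)) / 2 * ∑ i : Fin n, L i * ‖h i‖ ^ 2) := by
      refine mul_nonneg (by positivity) ?_
      rw [ContinuousLinearMap.zero_apply, zero_add]
      refine mul_nonneg ?_ hsum0
      have : (1 + (((0 : ℕ) : ℝ) - 1) * ((τ : ℝ) - 1) / max 1 ((s : ℝ) - 1)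
          + ((C : ℝ) - 1) * (((0 : ℕ) : ℝ) * τ / s))
          = 1 - ((τ : ℝ) - 1) / max 1 ((s : ℝ) - 1) := by
        push_cast; ring
      rw [this]
      linarith
    linarith
  obtain ⟨K, _, hK⟩ := Finset.exists_subset_card_eq
    (s := (Finset.univ : Finset (Fin s))) (n := ξ) (by simpa using hξs)
  obtain ⟨j0, hj0⟩ : K.Nonempty := Finset.card_pos.1 (by omega)
  let c0 : Fin C := ⟨0, hCpos⟩
  have hperJ : ∀ J ∈ 𝒥, _ := fun J hJ => by
    have := fun c => eso_enum (P c) J (hsize c) (hcap J hJ c) hξs K hK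
    choose e he heK using this
    exact eso_perJ (τ := τ) (fJ J) J (hconv J hJ) (hdep J hJ) P hpart hdisj K e he heK c0 j0 hj0 x h
  have hcardeq : ((Fintype.piFinset (fun c : Fin C => (P c).powersetCard τ)).card : ℝ)
      = (esoOm C s τ).card := by
    have := fun c => eso_enum (P c) ∅ (hsize c) (by simp) hξs K hK
    choose e he heK using this
    have := eso_reindex τ P e he (fun _ => 1)
    simpa [esoOm] using this
  have htot := Finset.sum_le_sum hperJ
  set M := ∑ Z ∈ esoOm C s τ, (if j0 ∈ Z c0 then (1 : ℝ) else 0) with hM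
  have hMeq : M = τ / s * (esoOm C s τ).card := by
    have := eso_cnt (C := C) τ c0 j0
    field_simp
    linarith
  rw [Finset.sum_comm] at htot
  simp only [Finset.sum_sub_distrib, ← hf] at htot
  rw [Finset.sum_const, nsmul_eq_mul] at htot
  have hlin : fderiv ℝ f x h = ∑ i, fderiv ℝ f x (Function.update (fun _ => 0) i (h i)) := by
    rw [← map_sum]
    congr 1
    exact (Finset.univ_sum_single h).symm
  have hrhs : (∑ J ∈ 𝒥, ∑ Z ∈ esoOm C s τ, (if j0 ∈ Z c0 then ∑ i, (1 / (esoK K Z : ℝ)) *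
        (fJ J (x + Function.update (fun _ => 0) i ((esoK K Z : ℝ) • h i)) - fJ J x) else 0))
      ≤ ∑ Z ∈ esoOm C s τ, ((if j0 ∈ Z c0 then (1 : ℝ) else 0) * fderiv ℝ f x h +
          (if j0 ∈ Z c0 then (esoK K Z : ℝ) else 0) *
            ((∑ i : Fin n, L i * ‖h i‖ ^ 2) / 2)) := by
    rw [Finset.sum_comm]
    refine Finset.sum_le_sum fun Z _ => ?_
    by_cases hz : j0 ∈ Z c0
    · simp only [hz, if_true, one_mul]
      have hk : 0 < esoK K Z := by
        have h1 : 0 < (K ∩ Z c0).card :=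
          Finset.card_pos.2 ⟨j0, Finset.mem_inter.2 ⟨hj0, hz⟩⟩
        refine h1.trans_le ?_
        exact Finset.single_le_sum (f := fun c => (K ∩ Z c).card) (fun _ _ => Nat.zero_le _)
          (Finset.mem_univ c0)
      generalize esoK K Z = k at hk ⊢
      have hk' : (0 : ℝ) < k := by exact_mod_cast hk
      rw [Finset.sum_comm, hlin, Finset.sum_div, Finset.mul_sum, ← Finset.sum_add_distrib]
      refine Finset.sum_le_sum fun i _ => ?_
      rw [← Finset.mul_sum, Finset.sum_sub_distrib, ← hf, ← hf]
      have h1 := eso_descent L f hdiff hLip x i ((k : ℝ) • h i)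
      have h2 : (Function.update (fun _ => 0) i ((k : ℝ) • h i) :
          ∀ i : Fin n, EuclideanSpace ℝ (Fin (d i)))
          = (k : ℝ) • Function.update (fun _ => 0) i (h i) := by
        funext j
        by_cases hij : j = i
        · subst hij; simp
        · simp [Function.update_of_ne hij]
      rw [h2] at h1 ⊢
      rw [map_smul, norm_smul, Real.norm_of_nonneg hk'.le, smul_eq_mul] at h1
      rw [one_div, inv_mul_le_iff₀ hk']
      refine h1.trans (le_of_eq ?_)
      ring
    · simp [hz]
  have hfin := htot.trans hrhs
  rw [Finset.sum_add_distrib, ← Finset.sum_mul, ← Finset.sum_mul,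
    eso_moment τ hτ1 hτs c0 hj0, ← hM, hK, hMeq, ← hcardeq] at hfin
  refine le_of_sub_nonneg (le_of_le_of_eq (sub_nonneg.2 hfin) ?_)
  ring
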